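/- Let s ≥ 2 and 2 ≤ r' ≤ s' be integers with s' − r' < 2(s − 1), and let F : U → ℂ^{r'×s'} be a local orthogonal map in chart form from 𝒢(1,s) to 𝒢(r',s') that is non-null (there exists z₁ ∈ U with F(z₁)·F(z₁)ᴴ ≠ I_{r'}). Then there exist ℂ-linear subspaces N, K ⊆ ℂ^{r'+s'} such that: N has dimension r' − 1 and is totally isotropic for ⟨·,·⟩_{r',s'}; K has dimension s' − r' + 2 and decomposes as K = K₊ ⊕ K₋ where ⟨·,·⟩_{r',s'} is positive definite on K₊ with dim K₊ = 1, negative definite on K₋ with dim K₋ = s' − r' + 1, and ⟨u,v⟩_{r',s'} = 0 for u ∈ K₊, v ∈ K₋; moreover ⟨u,v⟩_{r',s'} = 0 for all u ∈ N, v ∈ K; and N ⊆ rowSpan([I_{r'} | F(z)]) ⊆ N ⊕ K for every z ∈ U. -/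

import Mathlib

open scoped BigOperators
open Matrix

noncomputable section

/-- Hermitian dot product of row vectors: `z ⬝ wᴴ`. -/
def cdot {n : ℕ} (z w : Fin n → ℂ) : ℂ := ∑ i, z i * (starRingEnd ℂ) (w i)

/-- The indefinite Hermitian inner product of signature `(a,b)` on `ℂ^{a+b}`. -/
def iip (a b : ℕ) (z w : Fin (a + b) → ℂ) : ℂ :=
  ∑ i : Fin (a + b), (if (i : ℕ) < a then (1 : ℂ) else -1) * z i * (starRingEnd ℂ) (w i)

/-- Row span of a matrix: the ℂ-linear span of its rows. -/
def rowSpan {m n : ℕ} (A : Matrix (Fin m) (Fin n) ℂ) : Submodule ℂ (Fin n → ℂ) :=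
  Submodule.span ℂ (Set.range fun i => A i)

/-- The chart matrix `[I_r | Z]`. -/
def chartMat (r s : ℕ) (Z : Matrix (Fin r) (Fin s) ℂ) : Matrix (Fin r) (Fin (r + s)) ℂ :=
  Matrix.of fun i j =>
    if h : (j : ℕ) < r then (if (i : ℕ) = (j : ℕ) then 1 else 0)
    else Z i ⟨(j : ℕ) - r, by have := j.isLt; omega⟩

/-!
A holomorphic function that vanishes on the unitary matrices near `1` vanishes near `1`: these are
the `exp (iX)` with `X` self-adjoint, and the self-adjoint matrices are totally real of maximal
dimension. Hence null points form a uniqueness set for holomorphic functions, and a finite family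
of generic holomorphic conditions holds simultaneously at some unitary translate of a given
configuration of points.

Let `z₀` be null and let `w₁, …, w_{s-1} = z₀ + t uₖ`, with `z₀, u₁, …` orthogonal, be nearby points
that are orthogonal to `z₀` and to each other in the sense `z ⬝ᵥ star w = 1`. Then `F z₀` and the
differences `F wₖ - F z₀` have mutually orthogonal row spaces. If some `F z - F w` had rank at least
`2`, a unitary translation would give every `F wₖ - F z₀` rank at least `2`, so that
`r' + 2 (s - 1) ≤ s'`. So all differences have rank at most one, and therefore share a column
factor or a row factor. A common row factor `b` and the null condition force the column factors to
be multiples of `F z₀ *ᵥ star b`, so in either case `α ᵥ* F` is constant for every `α` in a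
hyperplane `α ⬝ᵥ a = 0`.

The rows `[α | α ᵥ* F z₀]` span `N`. By uniqueness `F z *ᵥ star (α ᵥ* F z₀) = star α` for every
`z`, which makes the one remaining row `[star a | star a ᵥ* F z]` orthogonal to `N` within each of
the two definite factors separately; hence it lies in `K₊ ⊕ K₋`.
-/

open Filter Topology Set ComplexStarModule

section Identity

variable {E G : Type*} [NormedAddCommGroup E] [NormedSpace ℂ E] [NormedAddCommGroup G]
  [NormedSpace ℂ G] [CompleteSpace G] {U : Set E}

theorem eqOn_zero_of_convex_of_eventuallyEq_zero {f : E → G} (hU : IsOpen U) (hc : Convex ℝ U)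
    (hf : DifferentiableOn ℂ f U) {y : E} (hy : y ∈ U) (h0 : f =ᶠ[𝓝 y] 0) : EqOn f 0 U := by
  intro p hp
  let line : ℂ → E := fun t => y + t • (p - y)
  have hline : Differentiable ℂ line := by fun_prop
  have hconv : Convex ℝ (line ⁻¹' U) :=
    (hc.translate_preimage_right y).linear_preimage
      ((LinearMap.toSpanSingleton ℂ E (p - y)).restrictScalars ℝ)
  have han : AnalyticOnNhd ℂ (f ∘ line) (line ⁻¹' U) :=
    (hf.comp hline.differentiableOn (mapsTo_preimage _ _)).analyticOnNhd
      (hU.preimage hline.continuous)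
  have hzero : f ∘ line =ᶠ[𝓝 0] 0 :=
    (hline.continuous.tendsto' 0 y (by simp [line])).eventually h0
  simpa [line] using han.eqOn_zero_of_preconnected_of_eventuallyEq_zero hconv.isPreconnected
    (show (0 : ℂ) ∈ line ⁻¹' U by simpa [line]) hzero (show (1 : ℂ) ∈ line ⁻¹' U by simpa [line])

theorem eqOn_zero_of_isPreconnected_of_eventuallyEq_zero {f : E → G} (hU : IsOpen U)
    (hc : IsPreconnected U) (hf : DifferentiableOn ℂ f U) {y : E} (hy : y ∈ U)
    (h0 : f =ᶠ[𝓝 y] 0) : EqOn f 0 U := by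
  suffices h : U ⊆ {x | f =ᶠ[𝓝 x] 0} from fun p hp => (h hp).self_of_nhds
  refine hc.subset_of_closure_inter_subset isOpen_setOfPred_eventually_nhds ⟨y, hy, h0⟩ ?_
  rintro x ⟨hx, hxU⟩
  obtain ⟨r, hr, hball⟩ := Metric.isOpen_iff.1 hU x hxU
  obtain ⟨x', hx', hdist⟩ := Metric.mem_closure_iff.1 hx r hr
  exact (eqOn_zero_of_convex_of_eventuallyEq_zero Metric.isOpen_ball (convex_ball x r)
    (hf.mono hball) (Metric.mem_ball'.2 hdist) hx').eventuallyEq_of_mem (Metric.ball_mem_nhds x hr)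

theorem eqOn_zero_or_eqOn_zero_of_mul_eventuallyEq_zero {f g : E → ℂ} (hU : IsOpen U)
    (hc : IsPreconnected U) (hf : DifferentiableOn ℂ f U) (hg : DifferentiableOn ℂ g U)
    {y : E} (hy : y ∈ U) (h0 : f * g =ᶠ[𝓝 y] 0) : EqOn f 0 U ∨ EqOn g 0 U := by
  by_cases hfy : f =ᶠ[𝓝 y] 0
  · exact .inl (eqOn_zero_of_isPreconnected_of_eventuallyEq_zero hU hc hf hy hfy)
  obtain ⟨x, hfx, hmul, hx⟩ :=
    ((not_eventually.1 hfy).and_eventually (h0.eventually_nhds.and (hU.mem_nhds hy))).exists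
  have hfcont : ContinuousAt f x := hf.continuousOn.continuousAt (hU.mem_nhds hx)
  refine .inr (eqOn_zero_of_isPreconnected_of_eventuallyEq_zero hU hc hg hx ?_)
  filter_upwards [hmul, hfcont.eventually_ne hfx] with t ht hft
  exact (mul_eq_zero.1 ht).resolve_left hft

theorem differentiableOn_prod {κ : Type*} {f : κ → E → ℂ} (s : Finset κ)
    (hf : ∀ k, DifferentiableOn ℂ (f k) U) : DifferentiableOn ℂ (∏ k ∈ s, f k) U :=
  Finset.prod_induction f (DifferentiableOn ℂ · U) (fun _ _ => .mul)
    (differentiableOn_const 1) fun k _ => hf k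

theorem exists_eqOn_zero_of_prod_eventuallyEq_zero {κ : Type*} {f : κ → E → ℂ} (hU : IsOpen U)
    (hc : IsPreconnected U) (hf : ∀ k, DifferentiableOn ℂ (f k) U) {y : E} (hy : y ∈ U)
    (s : Finset κ) (h0 : ∏ k ∈ s, f k =ᶠ[𝓝 y] 0) : ∃ k ∈ s, EqOn (f k) 0 U := by
  classical
  induction s using Finset.induction_on with
  | empty => exact absurd h0.self_of_nhds one_ne_zero
  | insert a s ha ih =>
    rw [Finset.prod_insert ha] at h0
    rcases eqOn_zero_or_eqOn_zero_of_mul_eventuallyEq_zero hU hc (hf a)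
      (differentiableOn_prod s hf) hy h0 with h | h
    · exact ⟨a, s.mem_insert_self a, h⟩
    · obtain ⟨k, hk, hfk⟩ := ih (h.eventuallyEq_of_mem (hU.mem_nhds hy))
      exact ⟨k, Finset.mem_insert_of_mem hk, hfk⟩

end Identity

section Unitary

theorem eventuallyEq_zero_of_eq_zero_on_selfAdjoint {E G : Type*} [NormedAddCommGroup E]
    [NormedSpace ℂ E] [StarAddMonoid E] [StarModule ℂ E] [ContinuousStar E]
    [NormedAddCommGroup G] [NormedSpace ℂ G] [CompleteSpace G] {f : E → G}
    (hf : ∀ᶠ x in 𝓝 0, DifferentiableAt ℂ f x) (h : ∀ᶠ x in 𝓝 0, IsSelfAdjoint x → f x = 0) :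
    f =ᶠ[𝓝 0] 0 := by
  obtain ⟨r, hr, hball⟩ := Metric.eventually_nhds_iff_ball.1 (hf.and h)
  have hsmall : ∀ᶠ x : E in 𝓝 0, ‖(ℜ x : E)‖ < r / 4 ∧ ‖(ℑ x : E)‖ < r / 4 := by
    have hre : Continuous fun x : E => ‖(ℜ x : E)‖ := by
      simp only [realPart_apply_coe]; fun_prop
    have him : Continuous fun x : E => ‖(ℑ x : E)‖ := by
      simp only [imaginaryPart_apply_coe]; fun_prop
    have hr4 : 0 < r / 4 := by positivity
    exact ((hre.tendsto' 0 0 (by simp)).eventually_lt_const hr4).and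
      ((him.tendsto' 0 0 (by simp)).eventually_lt_const hr4)
  filter_upwards [hsmall] with x ⟨hxre, hxim⟩
  -- The complex line through `x` that meets the self-adjoint elements in a real line.
  let line : ℂ → E := fun t => (ℜ x : E) + t • (ℑ x : E)
  have hline : Differentiable ℂ line := by fun_prop
  have hmaps : MapsTo line (Metric.ball 0 2) (Metric.ball 0 r) := by
    intro t ht
    rw [mem_ball_zero_iff] at ht ⊢
    calc ‖line t‖ ≤ ‖(ℜ x : E)‖ + ‖t‖ * ‖(ℑ x : E)‖ := by
          simpa only [line, norm_smul] using norm_add_le (ℜ x : E) (t • (ℑ x : E))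
      _ < r := by nlinarith [norm_nonneg (ℑ x : E), norm_nonneg t]
  have han : AnalyticOnNhd ℂ (f ∘ line) (Metric.ball 0 2) :=
    DifferentiableOn.analyticOnNhd (fun t ht =>
      ((hball _ (hmaps ht)).1.comp t (hline t)).differentiableWithinAt) Metric.isOpen_ball
  have hreal : ∀ t : ℝ, (t : ℂ) ∈ Metric.ball (0 : ℂ) 2 → (f ∘ line) t = 0 := fun t ht =>
    (hball _ (hmaps ht)).2 <| (ℜ x).2.add <|
      IsSelfAdjoint.smul (Complex.conj_ofReal t) (ℑ x).2
  have hfreq : ∃ᶠ t in 𝓝[≠] (0 : ℂ), (f ∘ line) t = 0 := by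
    have hcast : Tendsto ((↑) : ℝ → ℂ) (𝓝[≠] 0) (𝓝[≠] 0) :=
      (Complex.continuous_ofReal.tendsto' 0 0 Complex.ofReal_zero).inf
        (tendsto_principal_principal.2 fun _ ht => Complex.ofReal_ne_zero.2 ht)
    refine hcast.frequently (Eventually.frequently ?_)
    have hnear := (hcast.mono_right nhdsWithin_le_nhds).eventually
      (Metric.ball_mem_nhds (0 : ℂ) two_pos)
    filter_upwards [hnear] with t ht using hreal t ht
  have hI : (f ∘ line) Complex.I = 0 := han.eqOn_zero_of_preconnected_of_frequently_eq_zero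
    (convex_ball (0 : ℂ) 2).isPreconnected (by simp) hfreq (show Complex.I ∈ _ by simp)
  simpa only [Function.comp_apply, line, realPart_add_I_smul_imaginaryPart,
    Pi.zero_apply] using hI

variable {A : Type*} [NormedRing A] [NormedAlgebra ℂ A] [CompleteSpace A]

theorem map_exp_I_smul_nhds_zero :
    map (fun x : A => NormedSpace.exp (Complex.I • x)) (𝓝 0) = 𝓝 1 := by
  have hmul : map (fun x : A => Complex.I • x) (𝓝 0) = 𝓝 0 := by
    simpa using (Homeomorph.smulOfNeZero Complex.I Complex.I_ne_zero).map_nhds_eq (0 : A)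
  have hexp : map (NormedSpace.exp : A → A) (𝓝 0) = 𝓝 1 := by
    simpa using (hasStrictFDerivAt_exp_zero (𝕂 := ℂ) (𝔸 := A)).map_nhds_eq_of_equiv
      (f' := ContinuousLinearEquiv.refl ℂ A)
  calc map (fun x : A => NormedSpace.exp (Complex.I • x)) (𝓝 0)
      = map NormedSpace.exp (map (fun x : A => Complex.I • x) (𝓝 0)) := Filter.map_map.symm
    _ = 𝓝 1 := by rw [hmul, hexp]

variable [StarRing A] [ContinuousStar A] [StarModule ℂ A]

theorem eventuallyEq_zero_of_eq_zero_on_unitary {f : A → ℂ}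
    (hf : ∀ᶠ x in 𝓝 1, DifferentiableAt ℂ f x) (h : ∀ᶠ x in 𝓝 1, x ∈ unitary A → f x = 0) :
    f =ᶠ[𝓝 1] 0 := by
  rw [← map_exp_I_smul_nhds_zero] at hf h ⊢
  refine eventuallyEq_zero_of_eq_zero_on_selfAdjoint
    (f := fun x => f (NormedSpace.exp (Complex.I • x))) ?_ ?_
  · filter_upwards [hf] with x hx
    have hexp : DifferentiableAt ℂ (NormedSpace.exp : A → A) (Complex.I • x) :=
      (NormedSpace.exp_analytic (𝕂 := ℂ) _).differentiableAt
    exact DifferentiableAt.comp x (g := f) hx (hexp.comp x (by fun_prop))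
  · filter_upwards [h] with x hx hsa
    exact hx (selfAdjoint.expUnitary ⟨x, hsa⟩).2

theorem exists_mem_unitary_forall_ne_zero {κ : Type*} [Finite κ] {V : Set A} (hV : IsOpen V)
    (hc : IsPreconnected V) (h1 : 1 ∈ V) {f : κ → A → ℂ} (hf : ∀ k, DifferentiableOn ℂ (f k) V)
    (hne : ∀ k, ∃ x ∈ V, f k x ≠ 0) : ∃ u ∈ unitary A, u ∈ V ∧ ∀ k, f k u ≠ 0 := by
  have := Fintype.ofFinite κ
  by_contra! hcon
  have hprod : ∏ k, f k =ᶠ[𝓝 1] 0 := by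
    refine eventuallyEq_zero_of_eq_zero_on_unitary ?_ ?_
    · filter_upwards [hV.mem_nhds h1] with x hx
      exact (differentiableOn_prod _ hf).differentiableAt (hV.mem_nhds hx)
    · filter_upwards [hV.mem_nhds h1] with x hx hu
      obtain ⟨k, hk⟩ := hcon x hu hx
      rw [Finset.prod_apply]
      exact Finset.prod_eq_zero (Finset.mem_univ k) hk
  obtain ⟨k, -, hk⟩ := exists_eqOn_zero_of_prod_eventuallyEq_zero hV hc hf h1 _ hprod
  obtain ⟨x, hx, hfx⟩ := hne k
  exact hfx (hk hx)

end Unitary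

section UnitaryOrbits

open scoped Matrix.Norms.L2Operator

variable {ι κ n : Type*} [Finite ι] [Finite κ] [Fintype n] [DecidableEq n]

theorem nhds_le_map_mulVec {v : ι → n → ℂ} (hv : LinearIndependent ℂ v) :
    𝓝 v ≤ map (fun g : Matrix n n ℂ => fun i => g *ᵥ v i) (𝓝 1) := by
  let act : Matrix n n ℂ →ₗ[ℂ] ι → n → ℂ :=
    LinearMap.pi fun i => (Matrix.mulVecBilin ℂ ℂ).flip (v i)
  have hsurj : Function.Surjective act := by
    intro w
    obtain ⟨T, hT⟩ := ((Module.Basis.span hv).constr ℂ w).exists_extend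
    refine ⟨LinearMap.toMatrix' T, funext fun i => ?_⟩
    have hTi : T (v i) = w i := by
      rw [← (Module.Basis.span hv).constr_basis ℂ w i, ← hT, LinearMap.comp_apply,
        Submodule.subtype_apply, Module.Basis.span_apply]
    simpa [act, LinearMap.toMatrix'_mulVec] using hTi
  have hopen : IsOpenMap act := act.isOpenMap_of_finiteDimensional hsurj
  have hone : act 1 = v := by ext1 i; simp [act]
  calc 𝓝 v = 𝓝 (act 1) := by rw [hone]
    _ ≤ map act (𝓝 1) := hopen.nhds_le 1

theorem exists_unitary_forall_apply_ne_zero {Ω : Set (ι → n → ℂ)} (hΩ : IsOpen Ω)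
    (hc : IsPreconnected Ω) {f : (ι → n → ℂ) → ℂ} (hf : DifferentiableOn ℂ f Ω)
    (hne : ∃ x ∈ Ω, f x ≠ 0) {v : κ → ι → n → ℂ} (hvΩ : ∀ k, v k ∈ Ω)
    (hv : ∀ k, LinearIndependent ℂ (v k)) :
    ∃ g ∈ unitaryGroup n ℂ, ∀ k, (fun i => g *ᵥ v k i) ∈ Ω ∧ f (fun i => g *ᵥ v k i) ≠ 0 := by
  have := Fintype.ofFinite ι
  have hact : ∀ k, Differentiable ℂ fun (g : Matrix n n ℂ) (i : ι) => g *ᵥ v k i :=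
    fun k => differentiable_pi.2 fun i =>
      ((Matrix.mulVecBilin ℂ ℂ).flip (v k i)).toContinuousLinearMap.differentiable
  have hnear : ∀ᶠ g : Matrix n n ℂ in 𝓝 1, ∀ k, (fun i => g *ᵥ v k i) ∈ Ω :=
    eventually_all.2 fun k => (hact k).continuous.continuousAt.eventually_mem
      (hΩ.mem_nhds (by simpa using hvΩ k))
  obtain ⟨r, hr, hball⟩ := Metric.eventually_nhds_iff_ball.1 hnear
  have h1 : (1 : Matrix n n ℂ) ∈ Metric.ball 1 r := Metric.mem_ball_self hr
  have hgeneric : ∀ k, ∃ g ∈ Metric.ball (1 : Matrix n n ℂ) r, f (fun i => g *ᵥ v k i) ≠ 0 := by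
    intro k
    by_contra! h
    have hzero : ∀ᶠ x in 𝓝 (v k), f x = 0 :=
      nhds_le_map_mulVec (hv k) (eventually_map.2 (eventually_of_mem (Metric.ball_mem_nhds 1 hr) h))
    obtain ⟨x, hx, hfx⟩ := hne
    exact hfx (eqOn_zero_of_isPreconnected_of_eventuallyEq_zero hΩ hc hf (hvΩ k) hzero hx)
  obtain ⟨g, hg, hgr, hfg⟩ := exists_mem_unitary_forall_ne_zero Metric.isOpen_ball
    (convex_ball (1 : Matrix n n ℂ) r).isPreconnected h1
    (fun k => hf.comp (hact k).differentiableOn fun g hg => hball g hg k) hgeneric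
  exact ⟨g, hg, fun k => ⟨hball g hgr k, hfg k⟩⟩

end UnitaryOrbits

section Null

variable {n : Type*} [Fintype n]

theorem ne_zero_of_dotProduct_star_eq_one {z : n → ℂ} (hz : z ⬝ᵥ star z = 1) : z ≠ 0 := by
  rintro rfl
  simp at hz

theorem dotProduct_star_mulVec_of_mem_unitary [DecidableEq n] {g : Matrix n n ℂ}
    (hg : g ∈ unitaryGroup n ℂ) (z w : n → ℂ) :
    (g *ᵥ z) ⬝ᵥ star (g *ᵥ w) = z ⬝ᵥ star w := by
  rw [star_mulVec, dotProduct_comm, ← dotProduct_mulVec, mulVec_mulVec, ← star_eq_conjTranspose,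
    mem_unitaryGroup_iff'.1 hg, one_mulVec, dotProduct_comm]

theorem eqOn_zero_of_eq_zero_on_null {U : Set (n → ℂ)} (hU : IsOpen U) (hc : IsPreconnected U)
    (hnull : ∃ z ∈ U, z ⬝ᵥ star z = 1) {f : (n → ℂ) → ℂ} (hf : DifferentiableOn ℂ f U)
    (h : ∀ z ∈ U, z ⬝ᵥ star z = 1 → f z = 0) : EqOn f 0 U := by
  classical
  by_contra hne
  obtain ⟨x, hx, hfx⟩ : ∃ x ∈ U, f x ≠ 0 := by simpa [EqOn] using hne
  obtain ⟨z, hz, hz1⟩ := hnull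
  obtain ⟨g, hg, hfg⟩ := exists_unitary_forall_apply_ne_zero (ι := Unit) (κ := Unit)
    (Ω := univ.pi fun _ => U) (isOpen_set_pi finite_univ fun _ _ => hU)
    (isPreconnected_univ_pi fun _ => hc) (f := fun v => f (v ()))
    (hf.comp (by fun_prop) fun v hv => hv () trivial) ⟨fun _ => x, fun _ _ => hx, hfx⟩
    (v := fun _ _ => z) (fun _ _ _ => hz)
    fun _ => linearIndependent_unique_iff.2 (ne_zero_of_dotProduct_star_eq_one hz1)
  refine (hfg ()).2 (h _ ((hfg ()).1 () trivial) ?_)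
  rw [dotProduct_star_mulVec_of_mem_unitary hg, hz1]

theorem eqOn_of_eq_on_null {κ : Type*} [Finite κ] {U : Set (n → ℂ)} (hU : IsOpen U)
    (hc : IsPreconnected U) (hnull : ∃ z ∈ U, z ⬝ᵥ star z = 1) {f g : (n → ℂ) → κ → ℂ}
    (hf : DifferentiableOn ℂ f U) (hg : DifferentiableOn ℂ g U)
    (h : ∀ z ∈ U, z ⬝ᵥ star z = 1 → f z = g z) : EqOn f g U := fun z hz => funext fun k => by
  have := Fintype.ofFinite κ
  refine sub_eq_zero.1 (eqOn_zero_of_eq_zero_on_null hU hc hnull (f := fun z => f z k - g z k)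
    ((differentiableOn_pi.1 hf k).sub (differentiableOn_pi.1 hg k)) (fun w hw hw1 => ?_) hz)
  rw [h w hw hw1, sub_self]

theorem exists_orthonormal_family_orthogonal {z : n → ℂ} (hz : z ≠ 0) :
    ∃ u : Fin (Fintype.card n - 1) → n → ℂ, (∀ k, u k ⬝ᵥ star z = 0) ∧
      ∀ k l, u k ⬝ᵥ star (u l) = if k = l then 1 else 0 := by
  have hinner (x y : EuclideanSpace ℂ n) : x.ofLp ⬝ᵥ star y.ofLp = inner ℂ y x := rfl
  have hrank : Module.finrank ℂ (ℂ ∙ WithLp.toLp 2 z)ᗮ = Fintype.card n - 1 := by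
    have hsum := Submodule.finrank_add_finrank_orthogonal (ℂ ∙ WithLp.toLp 2 z)
    rw [finrank_span_singleton (by simpa using hz), finrank_euclideanSpace] at hsum
    omega
  let b := (stdOrthonormalBasis ℂ (ℂ ∙ WithLp.toLp 2 z)ᗮ).reindex (finCongr hrank)
  refine ⟨fun k => (b k : EuclideanSpace ℂ n).ofLp, fun k => ?_, fun k l => ?_⟩
  · exact Submodule.mem_orthogonal_singleton_iff_inner_right.1 (b k).2
  · rw [hinner, ← Submodule.coe_inner, orthonormal_iff_ite.1 b.orthonormal]
    exact if_congr eq_comm rfl rfl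

theorem exists_orthogonal_family_of_null {U : Set (n → ℂ)} (hU : IsOpen U) {z : n → ℂ}
    (hz : z ∈ U) (hz1 : z ⬝ᵥ star z = 1) :
    ∃ w : Fin (Fintype.card n - 1) → n → ℂ, (∀ k, w k ∈ U) ∧ (∀ k, w k ⬝ᵥ star z = 1) ∧
      (Pairwise fun k l => w k ⬝ᵥ star (w l) = 1) ∧ ∀ k, LinearIndependent ℂ ![w k, z] := by
  obtain ⟨u, huz, huu⟩ :=
    exists_orthonormal_family_orthogonal (ne_zero_of_dotProduct_star_eq_one hz1)
  have hzu (k) : z ⬝ᵥ star (u k) = 0 := by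
    rw [dotProduct_star, huz, star_zero]
  have hnear : ∀ᶠ t : ℝ in 𝓝[>] 0, ∀ k, z + (t : ℂ) • u k ∈ U := by
    refine nhdsWithin_le_nhds (eventually_all.2 fun k => ?_)
    have hcont : Continuous fun t : ℝ => z + (t : ℂ) • u k := by fun_prop
    exact hcont.continuousAt.eventually_mem (hU.mem_nhds (by simpa using hz))
  obtain ⟨t, htU, ht⟩ := (hnear.and self_mem_nhdsWithin).exists
  have ht0 : (t : ℂ) ≠ 0 := Complex.ofReal_ne_zero.2 (ne_of_gt ht)
  refine ⟨fun k => z + (t : ℂ) • u k, htU, fun k => ?_, fun k l hkl => ?_, fun k => ?_⟩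
  · simp [huz, hz1]
  · simp [huz, hzu, huu, hkl, hz1]
  · refine LinearIndependent.pair_iff.2 fun a b hab => ?_
    have ha : a = 0 := by simpa [hzu, huu, ht0] using congrArg (· ⬝ᵥ star (u k)) hab
    have hb : b = 0 := by simpa [ha, hz1] using congrArg (· ⬝ᵥ star z) hab
    exact ⟨ha, hb⟩

end Null

section RankOne

variable {p q ι K : Type*} [Field K]

theorem exists_eq_smul_of_mul_eq_mul {x a : p → K} (ha : a ≠ 0)
    (h : ∀ i j, x i * a j = x j * a i) : ∃ c : K, x = c • a := by
  obtain ⟨j, hj⟩ := Function.ne_iff.1 ha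
  exact ⟨x j / a j, funext fun i => by simp_all [div_mul_eq_mul_div, eq_div_iff]⟩

theorem exists_eq_vecMulVec_iff_minors_eq_zero {A : Matrix p q K} :
    (∃ x y, A = vecMulVec x y) ↔ ∀ i i' j j', A i j * A i' j' = A i j' * A i' j := by
  constructor
  · rintro ⟨x, y, rfl⟩ i i' j j'
    simp only [vecMulVec_apply]
    ring
  · intro h
    by_cases hA : ∃ i j, A i j ≠ 0
    · obtain ⟨i₀, j₀, h₀⟩ := hA
      refine ⟨fun i => A i j₀ / A i₀ j₀, A i₀, ?_⟩
      ext i j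
      rw [vecMulVec_apply, div_mul_eq_mul_div, eq_div_iff h₀, h]
    · push Not at hA
      exact ⟨0, 0, by ext i j; simp [hA]⟩

theorem two_le_rank_of_minor_ne_zero [Finite p] [Fintype q] {A : Matrix p q K} {i i' : p} {j j' : q}
    (h : A i j * A i' j' ≠ A i j' * A i' j) : 2 ≤ A.rank := by
  have hdet : (A.submatrix ![i, i'] ![j, j']).det ≠ 0 := by
    rwa [det_fin_two, sub_ne_zero]
  calc 2 = (A.submatrix ![i, i'] ![j, j']).rank := by
        rw [rank_of_isUnit _ ((isUnit_iff_isUnit_det _).2 hdet.isUnit), Fintype.card_fin]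
    _ ≤ A.rank := rank_submatrix_le _ _ _

theorem parallel_or_parallel_of_vecMulVec_sub_vecMulVec {x a : p → K} {y b : q → K}
    (h : ∃ u v, vecMulVec x y - vecMulVec a b = vecMulVec u v) :
    (∀ i i', x i * a i' = x i' * a i) ∨ ∀ j j', y j * b j' = y j' * b j := by
  by_contra! hcon
  obtain ⟨⟨i, i', hxa⟩, j, j', hyb⟩ := hcon
  have hminor := exists_eq_vecMulVec_iff_minors_eq_zero.1 h i i' j j'
  simp only [Matrix.sub_apply, vecMulVec_apply] at hminor
  have hprod : (x i * a i' - x i' * a i) * (y j * b j' - y j' * b j) = 0 := by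
    linear_combination -hminor
  exact mul_ne_zero (sub_ne_zero.2 hxa) (sub_ne_zero.2 hyb) hprod

theorem exists_common_factor_of_pairwise_sub_eq_vecMulVec {M : ι → Matrix p q K}
    (h : ∀ i j, ∃ x y, M i - M j = vecMulVec x y) (i₀ : ι) :
    (∃ a, ∀ i, ∃ y, M i - M i₀ = vecMulVec a y) ∨ ∃ b, ∀ i, ∃ x, M i - M i₀ = vecMulVec x b := by
  by_cases hconst : ∀ i, M i - M i₀ = 0
  · exact .inl ⟨0, fun i => ⟨0, by simp [hconst i]⟩⟩
  push Not at hconst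
  obtain ⟨i₁, hi₁⟩ := hconst
  obtain ⟨a, b, hab⟩ := h i₁ i₀
  have ha : a ≠ 0 := by rintro rfl; exact hi₁ (by simp [hab])
  have hb : b ≠ 0 := by rintro rfl; exact hi₁ (by rw [hab]; ext; simp [vecMulVec_apply])
  have hdiff (i j : ι) : ∃ u v, (M i - M i₀) - (M j - M i₀) = vecMulVec u v := by
    simpa only [sub_sub_sub_cancel_right] using h i j
  have hpair (i : ι) : (∃ y, M i - M i₀ = vecMulVec a y) ∨ ∃ x, M i - M i₀ = vecMulVec x b := by
    obtain ⟨x, y, hxy⟩ := h i i₀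
    rcases parallel_or_parallel_of_vecMulVec_sub_vecMulVec (hxy ▸ hab ▸ hdiff i i₁) with hx | hy
    · obtain ⟨c, rfl⟩ := exists_eq_smul_of_mul_eq_mul ha hx
      exact .inl ⟨c • y, by rw [hxy, smul_vecMulVec, vecMulVec_smul]⟩
    · obtain ⟨c, rfl⟩ := exists_eq_smul_of_mul_eq_mul hb hy
      exact .inr ⟨c • x, by rw [hxy, smul_vecMulVec, vecMulVec_smul]⟩
  by_contra! hcon
  obtain ⟨i, hi⟩ := hcon.1 a
  obtain ⟨j, hj⟩ := hcon.2 b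
  obtain ⟨x, hx⟩ := (hpair i).resolve_left (not_exists.2 hi)
  obtain ⟨y, hy⟩ := (hpair j).resolve_right (not_exists.2 hj)
  rcases parallel_or_parallel_of_vecMulVec_sub_vecMulVec (hx ▸ hy ▸ hdiff i j) with hxa | hby
  · obtain ⟨c, rfl⟩ := exists_eq_smul_of_mul_eq_mul ha hxa
    exact hi (c • b) (by rw [hx, smul_vecMulVec, vecMulVec_smul])
  · obtain ⟨c, rfl⟩ := exists_eq_smul_of_mul_eq_mul (x := y) hb fun j j' => by
      linear_combination hby j' j
    exact hj (c • a) (by rw [hy, smul_vecMulVec, vecMulVec_smul])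

theorem exists_eq_smul_of_vecMulVec_star_eq [StarRing K] {x a : p → K}
    (h : vecMulVec x (star x) = vecMulVec a (star a)) : ∃ c : K, x = c • a := by
  by_cases hx : x = 0
  · exact ⟨0, by rw [hx, zero_smul]⟩
  obtain ⟨j, hj⟩ := Function.ne_iff.1 hx
  refine ⟨star (a j) / star (x j), funext fun i => ?_⟩
  have hij : x i * star (x j) = a i * star (a j) := congr_fun₂ h i j
  rw [Pi.smul_apply, smul_eq_mul, div_mul_eq_mul_div, eq_div_iff (star_ne_zero.2 hj), hij, mul_comm]

end RankOne

section Isometries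

variable {p q κ R : Type*} [Field R] [PartialOrder R] [StarRing R] [StarOrderedRing R]
  [Fintype q]

theorem exists_vecMulVec_eq_smul_of_mul_conjTranspose_eq_one [DecidableEq p] {M : Matrix p q R}
    {x : p → R} {b : q → R} (hM : M * Mᴴ = 1)
    (h : (M + vecMulVec x b) * (M + vecMulVec x b)ᴴ = 1) :
    ∃ t : R, vecMulVec x b = t • vecMulVec (M *ᵥ star b) b := by
  by_cases hb : b = 0
  · exact ⟨0, by ext; simp [hb, vecMulVec_apply]⟩
  set c := M *ᵥ star b with hc
  have hβ : b ⬝ᵥ star b ≠ 0 := dotProduct_self_star_eq_zero.not.2 hb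
  have hexpand : vecMulVec c (star x) + vecMulVec x (star c) +
      (b ⬝ᵥ star b) • vecMulVec x (star x) = 0 := by
    have hstar : b ᵥ* Mᴴ = star c := by rw [hc, star_mulVec, star_star]
    rwa [conjTranspose_add, conjTranspose_vecMulVec, Matrix.add_mul, Matrix.mul_add, Matrix.mul_add,
      hM, mul_vecMulVec, vecMulVec_mul, vecMulVec_mul_vecMulVec, hstar, vecMulVec_smul,
      add_assoc, add_eq_left, ← add_assoc] at h
  have hsquare : vecMulVec ((b ⬝ᵥ star b) • x + c) (star ((b ⬝ᵥ star b) • x + c)) =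
      vecMulVec c (star c) := by
    ext i j
    have hij := congr_fun₂ hexpand i j
    have hself : star (b ⬝ᵥ star b) = b ⬝ᵥ star b := (dotProduct_star b b).symm
    simp only [Matrix.add_apply, Matrix.smul_apply, vecMulVec_apply, Pi.add_apply, Pi.smul_apply,
      Pi.star_apply, star_add, star_smul, smul_eq_mul, Matrix.zero_apply, hself] at hij ⊢
    linear_combination (b ⬝ᵥ star b) * hij
  obtain ⟨t, ht⟩ := exists_eq_smul_of_vecMulVec_star_eq hsquare
  refine ⟨(b ⬝ᵥ star b)⁻¹ * (t - 1), ?_⟩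
  have hx : x = ((b ⬝ᵥ star b)⁻¹ * (t - 1)) • c := by
    rw [mul_smul, eq_inv_smul_iff₀ hβ, sub_smul, one_smul, ← ht, add_sub_cancel_right]
  rw [hx, smul_vecMulVec]

variable [Fintype κ]

theorem sum_rank_le_card_of_pairwise_mul_conjTranspose_eq_zero [Finite p]
    {A : κ → Matrix p q R} (h : Pairwise fun k l => A k * (A l)ᴴ = 0) :
    ∑ k, (A k).rank ≤ Fintype.card q := by
  classical
  have := Fintype.ofFinite p
  let sum : (Π k, (A k).vecMulLinear.range) →ₗ[R] q → R :=
    ∑ k, (A k).vecMulLinear.range.subtype ∘ₗ LinearMap.proj k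
  have hinj : Function.Injective sum := by
    refine (injective_iff_map_eq_zero sum).2 fun w hw => funext fun l => Subtype.ext ?_
    choose α hα using fun k => (w k).2
    have hsum : ∑ k, α k ᵥ* A k = 0 := by simpa [sum, ← hα] using hw
    have hl : α l ᵥ* (A l * (A l)ᴴ) = 0 := by
      calc α l ᵥ* (A l * (A l)ᴴ) = ∑ k, α k ᵥ* (A k * (A l)ᴴ) :=
            (Finset.sum_eq_single_of_mem (f := fun k => α k ᵥ* (A k * (A l)ᴴ)) l
              (Finset.mem_univ l) fun k _ hkl => by rw [h hkl, vecMul_zero]).symm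
        _ = (∑ k, α k ᵥ* A k) ᵥ* (A l)ᴴ := by simp only [sum_vecMul, vecMul_vecMul]
        _ = 0 := by rw [hsum, zero_vecMul]
    rw [← hα l]
    exact (vecMul_self_mul_conjTranspose_eq_zero _ _).1 hl
  calc ∑ k, (A k).rank = ∑ k, Module.finrank R (A k).vecMulLinear.range :=
        Finset.sum_congr rfl fun k _ => by rw [rank_eq_finrank_span_row, range_vecMulLinear]
    _ = Module.finrank R (Π k, (A k).vecMulLinear.range) := (Module.finrank_pi_fintype R).symm
    _ ≤ Module.finrank R (q → R) := LinearMap.finrank_le_finrank_of_injective hinj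
    _ = Fintype.card q := Module.finrank_fintype_fun_eq_card R

variable [Fintype p]

theorem rank_eq_card_of_mul_conjTranspose_eq_one [DecidableEq p] {M : Matrix p q R}
    (h : M * Mᴴ = 1) : M.rank = Fintype.card p := by
  rw [← rank_self_mul_conjTranspose, h, rank_one]

theorem card_add_sum_rank_sub_le_card [DecidableEq p] {M₀ : Matrix p q R} {M : κ → Matrix p q R}
    (h₀ : M₀ * M₀ᴴ = 1) (h₁ : ∀ k, M k * M₀ᴴ = 1) (h : Pairwise fun k l => M k * (M l)ᴴ = 1) :
    Fintype.card p + ∑ k, (M k - M₀).rank ≤ Fintype.card q := by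
  have h₁' (k : κ) : M₀ * (M k)ᴴ = 1 := by
    rw [← conjTranspose_conjTranspose M₀, ← conjTranspose_mul, h₁, conjTranspose_one]
  have horth : Pairwise fun k l : Option κ =>
      k.elim M₀ (fun k => M k - M₀) * (l.elim M₀ fun l => M l - M₀)ᴴ = 0 := by
    rintro (_ | k) (_ | l) hkl
    · exact absurd rfl hkl
    · simp [Matrix.mul_sub, h₀, h₁']
    · simp [Matrix.sub_mul, h₀, h₁]
    · simp [Matrix.sub_mul, Matrix.mul_sub, h₀, h₁, h₁', h (fun hkl' => hkl (congrArg some hkl'))]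
  have hsum := sum_rank_le_card_of_pairwise_mul_conjTranspose_eq_zero horth
  rwa [Fintype.sum_option, Option.elim_none, rank_eq_card_of_mul_conjTranspose_eq_one h₀] at hsum

end Isometries

/-- A local orthogonal map in chart form from `𝒢(1,s)` to `𝒢(r',s')`, where `s`, `r'`, `s'` are the
cardinalities of `n`, `p`, `q`. Holomorphy is required entrywise, so that no norm on matrices has
to be chosen. -/
structure IsLocalOrthogonalMap {n p q : Type*} [Fintype n] [Fintype q] [DecidableEq p]
    (U : Set (n → ℂ)) (F : (n → ℂ) → Matrix p q ℂ) : Prop where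
  isOpen : IsOpen U
  isPreconnected : IsPreconnected U
  exists_null : ∃ z ∈ U, z ⬝ᵥ star z = 1
  differentiableOn : ∀ i j, DifferentiableOn ℂ (fun z => F z i j) U
  mul_conjTranspose_eq_one : ∀ z ∈ U, ∀ w ∈ U, z ⬝ᵥ star w = 1 → F z * (F w)ᴴ = 1

namespace IsLocalOrthogonalMap

open scoped ComplexOrder

variable {n p q : Type*} [Fintype n] [Fintype q] [DecidableEq p]
  {U : Set (n → ℂ)} {F : (n → ℂ) → Matrix p q ℂ}

theorem differentiableOn_mulVec [Finite p] (hF : IsLocalOrthogonalMap U F) (β : q → ℂ) :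
    DifferentiableOn ℂ (fun z => F z *ᵥ β) U :=
  differentiableOn_pi.2 fun i => .fun_sum fun j _ => (hF.differentiableOn i j).mul_const (β j)

theorem exists_unitary_forall_two_le_rank_sub [Finite p] [DecidableEq n] {κ : Type*}
    [Finite κ] (hF : IsLocalOrthogonalMap U F)
    (hgen : ∃ z ∈ U, ∃ w ∈ U, ¬∃ x y, F z - F w = vecMulVec x y)
    {v : κ → n → ℂ} {z₀ : n → ℂ} (hv : ∀ k, v k ∈ U) (hz₀ : z₀ ∈ U)
    (hind : ∀ k, LinearIndependent ℂ ![v k, z₀]) :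
    ∃ g ∈ unitaryGroup n ℂ, ∀ k, g *ᵥ v k ∈ U ∧ g *ᵥ z₀ ∈ U ∧
      2 ≤ (F (g *ᵥ v k) - F (g *ᵥ z₀)).rank := by
  obtain ⟨z, hz, w, hw, hzw⟩ := hgen
  rw [exists_eq_vecMulVec_iff_minors_eq_zero] at hzw
  push Not at hzw
  obtain ⟨i, i', j, j', hminor⟩ := hzw
  let entry (i : p) (j : q) (v : Fin 2 → n → ℂ) : ℂ := (F (v 0) - F (v 1)) i j
  let Ω : Set (Fin 2 → n → ℂ) := univ.pi fun _ => U
  have hcoord (e i j) : DifferentiableOn ℂ (fun v : Fin 2 → n → ℂ => F (v e) i j) Ω :=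
    (hF.differentiableOn i j).comp (by fun_prop) fun v hv => hv e trivial
  have hentry (i j) : DifferentiableOn ℂ (entry i j) Ω := (hcoord 0 i j).sub (hcoord 1 i j)
  have hmem {x y : n → ℂ} (hx : x ∈ U) (hy : y ∈ U) : ![x, y] ∈ Ω := by
    simp [Ω, Fin.forall_fin_two, hx, hy]
  obtain ⟨g, hg, hgen⟩ := exists_unitary_forall_apply_ne_zero (v := fun k => ![v k, z₀])
    (isOpen_set_pi finite_univ fun _ _ => hF.isOpen)
    (isPreconnected_univ_pi fun _ => hF.isPreconnected)
    (f := fun v => entry i j v * entry i' j' v - entry i j' v * entry i' j v)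
    (((hentry i j).mul (hentry i' j')).sub ((hentry i j').mul (hentry i' j)))
    ⟨![z, w], hmem hz hw, sub_ne_zero.2 hminor⟩ (fun k => hmem (hv k) hz₀) hind
  exact ⟨g, hg, fun k => ⟨(hgen k).1 0 trivial, (hgen k).1 1 trivial,
    two_le_rank_of_minor_ne_zero (sub_ne_zero.1 (hgen k).2)⟩⟩

variable [Fintype p]

theorem card_le_card (hF : IsLocalOrthogonalMap U F) : Fintype.card p ≤ Fintype.card q := by
  obtain ⟨z, hz, hnull⟩ := hF.exists_null
  exact (rank_eq_card_of_mul_conjTranspose_eq_one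
    (hF.mul_conjTranspose_eq_one z hz z hz hnull)).symm.trans_le (rank_le_card_width _)

theorem exists_sub_eq_vecMulVec (hF : IsLocalOrthogonalMap U F)
    (hcodim : Fintype.card q + 2 < Fintype.card p + 2 * Fintype.card n) {z w : n → ℂ}
    (hz : z ∈ U) (hw : w ∈ U) : ∃ x y, F z - F w = vecMulVec x y := by
  classical
  by_contra hgen
  obtain ⟨z₀, hz₀, hnull⟩ := hF.exists_null
  obtain ⟨v, hv, hvz, hvv, hind⟩ := exists_orthogonal_family_of_null hF.isOpen hz₀ hnull
  obtain ⟨g, hg, hrank⟩ :=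
    hF.exists_unitary_forall_two_le_rank_sub ⟨z, hz, w, hw, hgen⟩ hv hz₀ hind
  have hone {x y : n → ℂ} (hx : g *ᵥ x ∈ U) (hy : g *ᵥ y ∈ U) (hxy : x ⬝ᵥ star y = 1) :
      F (g *ᵥ x) * (F (g *ᵥ y))ᴴ = 1 :=
    hF.mul_conjTranspose_eq_one _ hx _ hy (by rw [dotProduct_star_mulVec_of_mem_unitary hg, hxy])
  obtain ⟨k₀⟩ : Nonempty (Fin (Fintype.card n - 1)) :=
    Fin.pos_iff_nonempty.1 (by have := hF.card_le_card; omega)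
  have hgz₀ := (hrank k₀).2.1
  have hcount := card_add_sum_rank_sub_le_card (hone hgz₀ hgz₀ hnull)
    (fun k => hone (hrank k).1 hgz₀ (hvz k))
    fun k l hkl => hone (hrank k).1 (hrank l).1 (hvv hkl)
  have hsum := Finset.card_nsmul_le_sum Finset.univ _ 2 fun k _ => (hrank k).2.2
  rw [Finset.card_univ, Fintype.card_fin, smul_eq_mul] at hsum
  omega

theorem differentiableOn_vecMul (hF : IsLocalOrthogonalMap U F) (α : p → ℂ) :
    DifferentiableOn ℂ (fun z => α ᵥ* F z) U :=
  differentiableOn_pi.2 fun j => .fun_sum fun i _ => (hF.differentiableOn i j).const_mul (α i)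

theorem exists_forall_vecMul_eq (hF : IsLocalOrthogonalMap U F)
    (hcodim : Fintype.card q + 2 < Fintype.card p + 2 * Fintype.card n) {z₀ : n → ℂ}
    (hz₀ : z₀ ∈ U) (hnull : z₀ ⬝ᵥ star z₀ = 1) :
    ∃ c : p → ℂ, ∀ α, α ⬝ᵥ c = 0 → ∀ z ∈ U, α ᵥ* F z = α ᵥ* F z₀ := by
  rcases exists_common_factor_of_pairwise_sub_eq_vecMulVec (M := fun z : U => F z)
    (fun z w => hF.exists_sub_eq_vecMulVec hcodim z.2 w.2) ⟨z₀, hz₀⟩ with ⟨c, hc⟩ | ⟨b, hb⟩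
  · refine ⟨c, fun α hα z hz => ?_⟩
    obtain ⟨y, hy⟩ := hc ⟨z, hz⟩
    rw [← sub_eq_zero, ← vecMul_sub, hy, vecMul_vecMulVec, hα, zero_smul]
  · refine ⟨F z₀ *ᵥ star b, fun α hα => ?_⟩
    refine eqOn_of_eq_on_null hF.isOpen hF.isPreconnected hF.exists_null
      (hF.differentiableOn_vecMul α) (differentiableOn_const _) fun z hz hz1 => ?_
    obtain ⟨x, hx⟩ := hb ⟨z, hz⟩
    have hFz : F z = F z₀ + vecMulVec x b := sub_eq_iff_eq_add'.1 hx
    obtain ⟨t, ht⟩ := exists_vecMulVec_eq_smul_of_mul_conjTranspose_eq_one (x := x)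
      (hF.mul_conjTranspose_eq_one z₀ hz₀ z₀ hz₀ hnull)
      (hFz ▸ hF.mul_conjTranspose_eq_one z hz z hz hz1)
    rw [hFz, ht, vecMul_add, vecMul_smul, vecMul_vecMulVec, hα, zero_smul, smul_zero, add_zero]

theorem exists_ne_zero_forall_vecMul_eq [Nonempty p] (hF : IsLocalOrthogonalMap U F)
    (hcodim : Fintype.card q + 2 < Fintype.card p + 2 * Fintype.card n) {z₀ : n → ℂ}
    (hz₀ : z₀ ∈ U) (hnull : z₀ ⬝ᵥ star z₀ = 1) :
    ∃ a ≠ (0 : p → ℂ), ∀ α, α ⬝ᵥ a = 0 → ∀ z ∈ U, α ᵥ* F z = α ᵥ* F z₀ := by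
  obtain ⟨c, hc⟩ := hF.exists_forall_vecMul_eq hcodim hz₀ hnull
  by_cases hc0 : c = 0
  · exact ⟨1, one_ne_zero, fun α _ => hc α (hc0 ▸ dotProduct_zero α)⟩
  · exact ⟨c, hc0, hc⟩

theorem mulVec_star_vecMul_eq (hF : IsLocalOrthogonalMap U F) {α : p → ℂ} {β : q → ℂ}
    (hα : ∀ z ∈ U, α ᵥ* F z = β) {z : n → ℂ} (hz : z ∈ U) : F z *ᵥ star β = star α := by
  refine eqOn_of_eq_on_null hF.isOpen hF.isPreconnected hF.exists_null
    (hF.differentiableOn_mulVec _) (differentiableOn_const _) (fun w hw hw1 => ?_) hz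
  rw [← hα w hw, star_vecMul, mulVec_mulVec, hF.mul_conjTranspose_eq_one w hw w hw hw1, one_mulVec]

end IsLocalOrthogonalMap

section HyperplaneComplement

variable {p R : Type*} [Fintype p] [Field R]

theorem finrank_ker_dotProductBilin {a : p → R} (ha : a ≠ 0) :
    Module.finrank R (dotProductBilin R R a).ker = Fintype.card p - 1 := by
  have hne : dotProductBilin R R a ≠ 0 := fun h =>
    ha (dotProduct_eq_zero a fun x => LinearMap.congr_fun h x)
  have := Module.Dual.finrank_ker_add_one_of_ne_zero hne
  rw [Module.finrank_fintype_fun_eq_card] at this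
  omega

variable [PartialOrder R] [StarRing R] [StarOrderedRing R]

theorem exists_sub_smul_star_dotProduct_eq_zero {a : p → R} (ha : a ≠ 0) (x : p → R) :
    ∃ t : R, (x - t • star a) ⬝ᵥ a = 0 :=
  ⟨x ⬝ᵥ a / (star a ⬝ᵥ a), by
    rw [sub_dotProduct, smul_dotProduct, smul_eq_mul,
      div_mul_cancel₀ _ (dotProduct_star_self_eq_zero.not.2 ha), sub_self]⟩

theorem mem_span_singleton_star_of_forall_dotProduct_star_eq_zero {a y : p → R} (ha : a ≠ 0)
    (h : ∀ α, α ⬝ᵥ a = 0 → y ⬝ᵥ star α = 0) : y ∈ Submodule.span R {star a} := by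
  obtain ⟨t, ht⟩ := exists_sub_smul_star_dotProduct_eq_zero ha y
  have hself : (y - t • star a) ⬝ᵥ star (y - t • star a) = 0 := by
    rw [sub_dotProduct, h _ ht, smul_dotProduct, star_dotProduct_star,
      ht, star_zero, smul_zero, sub_zero]
  exact Submodule.mem_span_singleton.2
    ⟨t, (sub_eq_zero.1 (dotProduct_self_star_eq_zero.1 hself)).symm⟩

end HyperplaneComplement

theorem finrank_comap_of_surjective {K V W : Type*} [Field K] [AddCommGroup V] [Module K V]
    [FiniteDimensional K V] [AddCommGroup W] [Module K W] {f : V →ₗ[K] W}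
    (hf : Function.Surjective f) (S : Submodule K W) :
    Module.finrank K (S.comap f) = Module.finrank K f.ker + Module.finrank K S := by
  have hrank := (f.domRestrict (S.comap f)).finrank_range_add_finrank_ker
  rw [LinearMap.range_domRestrict, Submodule.map_comap_eq_of_surjective hf,
    LinearMap.ker_domRestrict] at hrank
  have hker : f.ker ≤ S.comap f := Submodule.comap_mono bot_le
  rw [← hrank, (Submodule.comapSubtypeEquivOfLe hker).finrank_eq, add_comm]

/-- The identification `ℂ^a × ℂ^b = ℂ^{a+b}`, under which the two factors are the standard maximal
positive and negative subspaces of `iip a b`. -/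
def appendLinearEquiv (a b : ℕ) : ((Fin a → ℂ) × (Fin b → ℂ)) ≃ₗ[ℂ] (Fin (a + b) → ℂ) where
  __ := Fin.appendEquiv a b
  map_add' x y := by
    ext i
    refine Fin.addCases (fun i => ?_) (fun i => ?_) i <;> simp [Fin.appendEquiv]
  map_smul' c x := by
    ext i
    refine Fin.addCases (fun i => ?_) (fun i => ?_) i <;> simp [Fin.appendEquiv]

@[simp]
theorem appendLinearEquiv_apply {a b : ℕ} (x : (Fin a → ℂ) × (Fin b → ℂ)) :
    appendLinearEquiv a b x = Fin.append x.1 x.2 := rfl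

theorem append_add_append {a b : ℕ} (x x' : Fin a → ℂ) (y y' : Fin b → ℂ) :
    Fin.append x y + Fin.append x' y' = Fin.append (x + x') (y + y') :=
  (map_add (appendLinearEquiv a b) (x, y) (x', y')).symm

theorem smul_append {a b : ℕ} (c : ℂ) (x : Fin a → ℂ) (y : Fin b → ℂ) :
    c • Fin.append x y = Fin.append (c • x) (c • y) :=
  (map_smul (appendLinearEquiv a b) c (x, y)).symm

theorem iip_append {a b : ℕ} (x x' : Fin a → ℂ) (y y' : Fin b → ℂ) :
    iip a b (Fin.append x y) (Fin.append x' y') = x ⬝ᵥ star x' - y ⬝ᵥ star y' := by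
  simp [iip, Fin.sum_univ_add, dotProduct, sub_eq_add_neg]

theorem vecMul_chartMat {r s : ℕ} (Z : Matrix (Fin r) (Fin s) ℂ) (α : Fin r → ℂ) :
    α ᵥ* chartMat r s Z = Fin.append α (α ᵥ* Z) := by
  ext j
  refine Fin.addCases (fun j => ?_) (fun j => ?_) j <;>
    simp [vecMul, dotProduct, chartMat, ← Fin.ext_iff]

theorem rowSpan_eq_range_vecMulLinear {m n : ℕ} (A : Matrix (Fin m) (Fin n) ℂ) :
    rowSpan A = A.vecMulLinear.range := (range_vecMulLinear A).symm

section Signature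

open scoped ComplexOrder

variable {r s : ℕ} {M : Matrix (Fin r) (Fin s) ℂ} {a : Fin r → ℂ}

/-- The subspace of `rowSpan (chartMat r s M)` cut out by the hyperplane of coefficient vectors
orthogonal to `a`; the subspace `N` of the sandwich when `M` is a null value of the map. -/
def isotropicPart (M : Matrix (Fin r) (Fin s) ℂ) (a : Fin r → ℂ) : Submodule ℂ (Fin (r + s) → ℂ) :=
  (dotProductBilin ℂ ℂ a).ker.map (chartMat r s M).vecMulLinear

/-- The line `K₊` of the sandwich. -/
def positivePart (s : ℕ) (a : Fin r → ℂ) : Submodule ℂ (Fin (r + s) → ℂ) :=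
  (ℂ ∙ star a).map ((appendLinearEquiv r s).toLinearMap ∘ₗ LinearMap.inl ℂ _ _)

/-- The subspace `K₋` of the sandwich: all of the negative factor `0 × ℂ^s` that is orthogonal to
`isotropicPart M a`. -/
def negativePart (M : Matrix (Fin r) (Fin s) ℂ) (a : Fin r → ℂ) : Submodule ℂ (Fin (r + s) → ℂ) :=
  ((ℂ ∙ star a).comap Mᴴ.vecMulLinear).map
    ((appendLinearEquiv r s).toLinearMap ∘ₗ LinearMap.inr ℂ _ _)

theorem mem_isotropicPart {u : Fin (r + s) → ℂ} :
    u ∈ isotropicPart M a ↔ ∃ α, α ⬝ᵥ a = 0 ∧ Fin.append α (α ᵥ* M) = u := by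
  simp only [isotropicPart, Submodule.mem_map, LinearMap.mem_ker, dotProductBilin_apply_apply,
    dotProduct_comm a, vecMulLinear_apply, vecMul_chartMat]

theorem mem_positivePart {u : Fin (r + s) → ℂ} :
    u ∈ positivePart s a ↔ ∃ t : ℂ, Fin.append (t • star a) 0 = u := by
  simp [positivePart, Submodule.mem_map, Submodule.mem_span_singleton]

theorem mem_negativePart {u : Fin (r + s) → ℂ} :
    u ∈ negativePart M a ↔ ∃ w, w ᵥ* Mᴴ ∈ ℂ ∙ star a ∧ Fin.append 0 w = u := by
  simp [negativePart, Submodule.mem_map]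

theorem finrank_isotropicPart (ha : a ≠ 0) : Module.finrank ℂ (isotropicPart M a) = r - 1 := by
  have hinj : Function.Injective (chartMat r s M).vecMulLinear := fun α β h => by
    simp only [vecMulLinear_apply, vecMul_chartMat] at h
    exact funext fun i => by simpa using congrFun h (Fin.castAdd s i)
  rw [isotropicPart, ← (Submodule.equivMapOfInjective _ hinj _).finrank_eq,
    finrank_ker_dotProductBilin ha, Fintype.card_fin]

theorem finrank_positivePart (ha : a ≠ 0) : Module.finrank ℂ (positivePart s a) = 1 := by
  rw [positivePart, Submodule.map_comp, LinearEquiv.finrank_map_eq,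
    ← (Submodule.equivMapOfInjective _ LinearMap.inl_injective _).finrank_eq,
    finrank_span_singleton (star_ne_zero.2 ha)]

theorem finrank_negativePart (hM : M * Mᴴ = 1) (ha : a ≠ 0) :
    Module.finrank ℂ (negativePart M a) = s - r + 1 := by
  have hsurj : Function.Surjective Mᴴ.vecMulLinear := fun α =>
    ⟨α ᵥ* M, by rw [vecMulLinear_apply, vecMul_vecMul, hM, vecMul_one]⟩
  have hker := Mᴴ.vecMulLinear.finrank_range_add_finrank_ker
  rw [LinearMap.range_eq_top.2 hsurj, finrank_top, Module.finrank_fin_fun,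
    Module.finrank_fin_fun] at hker
  rw [negativePart, Submodule.map_comp, LinearEquiv.finrank_map_eq,
    ← (Submodule.equivMapOfInjective _ LinearMap.inr_injective _).finrank_eq,
    finrank_comap_of_surjective hsurj, finrank_span_singleton (star_ne_zero.2 ha)]
  omega

theorem iip_eq_zero_of_mem_isotropicPart (hM : M * Mᴴ = 1) {u v : Fin (r + s) → ℂ}
    (hu : u ∈ isotropicPart M a) (hv : v ∈ isotropicPart M a) : iip r s u v = 0 := by
  obtain ⟨α, -, rfl⟩ := mem_isotropicPart.1 hu
  obtain ⟨β, -, rfl⟩ := mem_isotropicPart.1 hv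
  rw [iip_append, star_vecMul, dotProduct_mulVec, vecMul_vecMul, hM, vecMul_one, sub_self]

theorem iip_self_re_pos_of_mem_positivePart {u : Fin (r + s) → ℂ} (hu : u ∈ positivePart s a)
    (hu0 : u ≠ 0) : 0 < (iip r s u u).re := by
  obtain ⟨t, rfl⟩ := mem_positivePart.1 hu
  rw [iip_append, zero_dotProduct, sub_zero]
  exact (Complex.pos_iff.1 (dotProduct_self_star_pos_iff.2 fun h =>
    hu0 (by rw [h]; exact map_zero (appendLinearEquiv r s)))).1

theorem iip_self_re_neg_of_mem_negativePart {u : Fin (r + s) → ℂ} (hu : u ∈ negativePart M a)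
    (hu0 : u ≠ 0) : (iip r s u u).re < 0 := by
  obtain ⟨w, -, rfl⟩ := mem_negativePart.1 hu
  rw [iip_append, zero_dotProduct, zero_sub, Complex.neg_re, neg_lt_zero]
  exact (Complex.pos_iff.1 (dotProduct_self_star_pos_iff.2 fun h =>
    hu0 (by rw [h]; exact map_zero (appendLinearEquiv r s)))).1

theorem iip_eq_zero_of_mem_positivePart_of_mem_negativePart {u v : Fin (r + s) → ℂ}
    (hu : u ∈ positivePart s a) (hv : v ∈ negativePart M a) : iip r s u v = 0 := by
  obtain ⟨t, rfl⟩ := mem_positivePart.1 hu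
  obtain ⟨w, -, rfl⟩ := mem_negativePart.1 hv
  rw [iip_append, star_zero, dotProduct_zero, zero_dotProduct, sub_zero]

theorem disjoint_positivePart_negativePart : Disjoint (positivePart s a) (negativePart M a) :=
  Submodule.disjoint_def.2 fun _ hpos hneg => by
    by_contra hu0
    exact (iip_self_re_pos_of_mem_positivePart hpos hu0).not_gt
      (iip_self_re_neg_of_mem_negativePart hneg hu0)

theorem finrank_positivePart_sup_negativePart (hM : M * Mᴴ = 1) (ha : a ≠ 0) :
    Module.finrank ℂ ↥(positivePart s a ⊔ negativePart M a) = s - r + 2 := by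
  have := Submodule.finrank_sup_add_finrank_inf_eq (positivePart s a) (negativePart M a)
  rw [disjoint_positivePart_negativePart.eq_bot, finrank_bot, finrank_positivePart ha,
    finrank_negativePart hM ha] at this
  omega

theorem iip_eq_zero_of_mem_isotropicPart_of_mem_sup {u v : Fin (r + s) → ℂ}
    (hu : u ∈ isotropicPart M a) (hv : v ∈ positivePart s a ⊔ negativePart M a) :
    iip r s u v = 0 := by
  obtain ⟨α, hα, rfl⟩ := mem_isotropicPart.1 hu
  have hspan {x : Fin r → ℂ} (hx : x ∈ ℂ ∙ star a) : α ⬝ᵥ star x = 0 := by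
    obtain ⟨t, rfl⟩ := Submodule.mem_span_singleton.1 hx
    rw [star_smul, star_star, dotProduct_smul, hα, smul_zero]
  obtain ⟨_, hp, _, hn, rfl⟩ := Submodule.mem_sup.1 hv
  obtain ⟨t, rfl⟩ := mem_positivePart.1 hp
  obtain ⟨w, hw, rfl⟩ := mem_negativePart.1 hn
  have hMw : (α ᵥ* M) ⬝ᵥ star w = α ⬝ᵥ star (w ᵥ* Mᴴ) := by
    rw [star_vecMul, conjTranspose_conjTranspose, dotProduct_mulVec]
  rw [append_add_append, add_zero, zero_add, iip_append, hMw, hspan hw,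
    hspan (Submodule.mem_span_singleton.2 ⟨t, rfl⟩), sub_zero]

variable {Z : Matrix (Fin r) (Fin s) ℂ}

theorem isotropicPart_le_rowSpan_chartMat (hZ : ∀ α, α ⬝ᵥ a = 0 → α ᵥ* Z = α ᵥ* M) :
    isotropicPart M a ≤ rowSpan (chartMat r s Z) := by
  rw [rowSpan_eq_range_vecMulLinear]
  intro u hu
  obtain ⟨α, hα, rfl⟩ := mem_isotropicPart.1 hu
  exact ⟨α, by rw [vecMulLinear_apply, vecMul_chartMat, hZ α hα]⟩

theorem append_zero_star_vecMul_mem_negativePart (ha : a ≠ 0)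
    (hZ : ∀ α, α ⬝ᵥ a = 0 → Z *ᵥ star (α ᵥ* M) = star α) :
    Fin.append 0 (star a ᵥ* Z) ∈ negativePart M a :=
  mem_negativePart.2 ⟨_, mem_span_singleton_star_of_forall_dotProduct_star_eq_zero ha
    fun α hα => by
      rw [← dotProduct_mulVec, ← star_vecMul, ← dotProduct_mulVec, hZ α hα, star_dotProduct_star,
        hα, star_zero], rfl⟩

theorem rowSpan_chartMat_le_sup (ha : a ≠ 0) (hZ : ∀ α, α ⬝ᵥ a = 0 → α ᵥ* Z = α ᵥ* M)
    (hZstar : ∀ α, α ⬝ᵥ a = 0 → Z *ᵥ star (α ᵥ* M) = star α) :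
    rowSpan (chartMat r s Z) ≤ isotropicPart M a ⊔ (positivePart s a ⊔ negativePart M a) := by
  rw [rowSpan_eq_range_vecMulLinear]
  rintro _ ⟨x, rfl⟩
  obtain ⟨t, ht⟩ := exists_sub_smul_star_dotProduct_eq_zero ha x
  have hsum : (chartMat r s Z).vecMulLinear x =
      Fin.append (x - t • star a) ((x - t • star a) ᵥ* M) +
        (Fin.append (t • star a) 0 + t • Fin.append 0 (star a ᵥ* Z)) := by
    rw [vecMulLinear_apply, vecMul_chartMat, ← hZ _ ht]
    rw [smul_append, smul_zero, append_add_append, append_add_append, add_zero, zero_add,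
      sub_add_cancel, ← smul_vecMul, ← add_vecMul, sub_add_cancel]
  rw [hsum]
  exact Submodule.add_mem_sup (mem_isotropicPart.2 ⟨_, ht, rfl⟩)
    (Submodule.add_mem_sup (mem_positivePart.2 ⟨t, rfl⟩)
      (Submodule.smul_mem _ t (append_zero_star_vecMul_mem_negativePart ha hZstar)))

end Signature

theorem sandwich_decomposition_of_nonnull_orthogonal_map_general {s r' s' : ℕ} (hr' : 0 < r')
    (hcodim : s' + 2 < r' + 2 * s) {U : Set (Fin s → ℂ)}
    {F : (Fin s → ℂ) → Matrix (Fin r') (Fin s') ℂ} (hF : IsLocalOrthogonalMap U F) :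
    ∃ N K Kp Km : Submodule ℂ (Fin (r' + s') → ℂ),
      Module.finrank ℂ ↥N = r' - 1 ∧
      (∀ u ∈ N, ∀ v ∈ N, iip r' s' u v = 0) ∧
      Module.finrank ℂ ↥K = s' - r' + 2 ∧
      Kp ⊔ Km = K ∧ Disjoint Kp Km ∧
      Module.finrank ℂ ↥Kp = 1 ∧
      Module.finrank ℂ ↥Km = s' - r' + 1 ∧
      (∀ u ∈ Kp, u ≠ 0 → 0 < (iip r' s' u u).re) ∧
      (∀ u ∈ Km, u ≠ 0 → (iip r' s' u u).re < 0) ∧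
      (∀ u ∈ Kp, ∀ v ∈ Km, iip r' s' u v = 0) ∧
      (∀ u ∈ N, ∀ v ∈ K, iip r' s' u v = 0) ∧
      ∀ z ∈ U,
        N ≤ rowSpan (chartMat r' s' (F z)) ∧ rowSpan (chartMat r' s' (F z)) ≤ N ⊔ K := by
  obtain ⟨z₀, hz₀, hnull⟩ := hF.exists_null
  have hM : F z₀ * (F z₀)ᴴ = 1 := hF.mul_conjTranspose_eq_one z₀ hz₀ z₀ hz₀ hnull
  have : Nonempty (Fin r') := Fin.pos_iff_nonempty.1 hr'
  obtain ⟨a, ha, hconst⟩ := hF.exists_ne_zero_forall_vecMul_eq (by simpa using hcodim) hz₀ hnull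
  exact ⟨isotropicPart (F z₀) a, positivePart s' a ⊔ negativePart (F z₀) a, positivePart s' a,
    negativePart (F z₀) a, finrank_isotropicPart ha,
    fun _ hu _ hv => iip_eq_zero_of_mem_isotropicPart hM hu hv,
    finrank_positivePart_sup_negativePart hM ha, rfl, disjoint_positivePart_negativePart,
    finrank_positivePart ha, finrank_negativePart hM ha,
    fun _ => iip_self_re_pos_of_mem_positivePart, fun _ => iip_self_re_neg_of_mem_negativePart,
    fun _ hu _ hv => iip_eq_zero_of_mem_positivePart_of_mem_negativePart hu hv,
    fun _ hu _ hv => iip_eq_zero_of_mem_isotropicPart_of_mem_sup hu hv,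
    fun z hz => ⟨isotropicPart_le_rowSpan_chartMat fun α hα => hconst α hα z hz,
      rowSpan_chartMat_le_sup ha (fun α hα => hconst α hα z hz)
        fun α hα => hF.mulVec_star_vecMul_eq (hconst α hα) hz⟩⟩

/-- Let `s ≥ 2`, `2 ≤ r' ≤ s'` with `s' − r' < 2(s − 1)`, and let `F` be
a non-null local orthogonal map in chart form from `𝒢(1,s)` to `𝒢(r',s')`.  Then there
exist subspaces `N, K ⊆ ℂ^{r'+s'}`: `N` is `(r'−1)`-dimensional and totally isotropic;
`K` is `(s'−r'+2)`-dimensional and decomposes as `K = K₊ ⊕ K₋` with `⟨·,·⟩_{r',s'}`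
positive definite on the line `K₊`, negative definite on the `(s'−r'+1)`-dimensional
`K₋`, and `K₊ ⊥ K₋`; moreover `N ⊥ K` and
`N ⊆ rowSpan([I_{r'} | F(z)]) ⊆ N ⊕ K` for all `z ∈ U`. -/
theorem sandwich_decomposition_of_nonnull_orthogonal_map
    (s r' s' : ℕ) (hs : 2 ≤ s) (hr' : 2 ≤ r') (hr's' : r' ≤ s')
    (hcodim : (s' : ℤ) - (r' : ℤ) < 2 * ((s : ℤ) - 1))
    (U : Set (Fin s → ℂ)) (hopen : IsOpen U) (hconn : IsPreconnected U)
    (hnull : ∃ z ∈ U, cdot z z = 1)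
    (F : (Fin s → ℂ) → Fin r' → Fin s' → ℂ)
    (hF : DifferentiableOn ℂ F U)
    (horth : ∀ z ∈ U, ∀ w ∈ U, cdot z w = 1 →
      Matrix.of (F z) * (Matrix.of (F w))ᴴ = (1 : Matrix (Fin r') (Fin r') ℂ))
    (hnonnull : ∃ z₁ ∈ U,
      Matrix.of (F z₁) * (Matrix.of (F z₁))ᴴ ≠ (1 : Matrix (Fin r') (Fin r') ℂ)) :
    ∃ N K Kp Km : Submodule ℂ (Fin (r' + s') → ℂ),
      Module.finrank ℂ ↥N = r' - 1 ∧
      (∀ u ∈ N, ∀ v ∈ N, iip r' s' u v = 0) ∧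
      Module.finrank ℂ ↥K = s' - r' + 2 ∧
      Kp ⊔ Km = K ∧ Disjoint Kp Km ∧
      Module.finrank ℂ ↥Kp = 1 ∧
      Module.finrank ℂ ↥Km = s' - r' + 1 ∧
      (∀ u ∈ Kp, u ≠ 0 → 0 < (iip r' s' u u).re) ∧
      (∀ u ∈ Km, u ≠ 0 → (iip r' s' u u).re < 0) ∧
      (∀ u ∈ Kp, ∀ v ∈ Km, iip r' s' u v = 0) ∧
      (∀ u ∈ N, ∀ v ∈ K, iip r' s' u v = 0) ∧
      ∀ z ∈ U,
        N ≤ rowSpan (chartMat r' s' (Matrix.of (F z))) ∧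
        rowSpan (chartMat r' s' (Matrix.of (F z))) ≤ N ⊔ K :=
  sandwich_decomposition_of_nonnull_orthogonal_map_general (by omega) (by omega)
    ⟨hopen, hconn, hnull, fun i j => differentiableOn_pi.1 (differentiableOn_pi.1 hF i) j, horth⟩
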